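/- Let A = kQ/I be a gentle algebra. Then the global dimension of A is infinite if and only if the bound quiver (Q, I) contains at least one oriented cycle with full relations, i.e. an oriented cycle α₁α₂⋯α_ℓ with t(α_ℓ) = s(α₁) such that α_i α_{i+1} ∈ I for all i (indices modulo ℓ). -/

import Mathlib

open MulOpposite DirectSum

set_option autoImplicit false

/-- The combinatorial data of a finite quiver together with a set of
length-two relations (`rel a b` means that the length-two path `a·b` lies in
the admissible ideal `I`). -/
structure GentleData : Type 1 where
  V : Type
  A : Type
  [fintypeV : Fintype V]
  [fintypeA : Fintype A]
  [decEqV : DecidableEq V]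
  [decEqA : DecidableEq A]
  src : A → V
  tgt : A → V
  rel : A → A → Prop

attribute [instance] GentleData.fintypeV GentleData.fintypeA GentleData.decEqV GentleData.decEqA

/-- The gentleness conditions on a bound quiver `(Q, I)`:
relations are composable length-two paths; at most two arrows start
(resp. end) at every vertex; for every arrow `β` there is at most one arrow `α`
with `αβ ∉ I` and at most one with `αβ ∈ I`, and dually; and there is a bound
on the length of paths avoiding relations (admissibility). -/
def IsGentle (Q : GentleData) : Prop :=
  (∀ a b, Q.rel a b → Q.tgt a = Q.src b) ∧
  (∀ v : Q.V, Set.ncard {a : Q.A | Q.src a = v} ≤ 2) ∧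
  (∀ v : Q.V, Set.ncard {a : Q.A | Q.tgt a = v} ≤ 2) ∧
  (∀ b : Q.A, Set.ncard {a : Q.A | Q.tgt a = Q.src b ∧ ¬ Q.rel a b} ≤ 1) ∧
  (∀ b : Q.A, Set.ncard {a : Q.A | Q.tgt a = Q.src b ∧ Q.rel a b} ≤ 1) ∧
  (∀ a : Q.A, Set.ncard {b : Q.A | Q.src b = Q.tgt a ∧ ¬ Q.rel a b} ≤ 1) ∧
  (∀ a : Q.A, Set.ncard {b : Q.A | Q.src b = Q.tgt a ∧ Q.rel a b} ≤ 1) ∧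
  (∃ N : ℕ, ∀ p : ℕ → Q.A, ¬ ∀ i, i < N → (Q.tgt (p i) = Q.src (p (i+1)) ∧ ¬ Q.rel (p i) (p (i+1))))

/-- Generators of the path algebra: one generator for each vertex (the
corresponding trivial path) and one for each arrow. -/
inductive GenSym (Q : GentleData) : Type
  | vertex : Q.V → GenSym Q
  | arrow : Q.A → GenSym Q

/-- The defining relations of the algebra `kQ/I`: the trivial paths are
orthogonal idempotents summing to `1`, arrows are compatible with the trivial
paths at their source and target, and the chosen length-two paths vanish. -/
inductive GentleRel (k : Type) [Field k] (Q : GentleData) :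
    FreeAlgebra k (GenSym Q) → FreeAlgebra k (GenSym Q) → Prop
  | idem (v : Q.V) : GentleRel k Q
      (FreeAlgebra.ι k (GenSym.vertex v) * FreeAlgebra.ι k (GenSym.vertex v))
      (FreeAlgebra.ι k (GenSym.vertex v))
  | orth (v w : Q.V) (h : v ≠ w) : GentleRel k Q
      (FreeAlgebra.ι k (GenSym.vertex v) * FreeAlgebra.ι k (GenSym.vertex w)) 0
  | sum_idem : GentleRel k Q (∑ v : Q.V, FreeAlgebra.ι k (GenSym.vertex v)) 1
  | src_mul (a : Q.A) : GentleRel k Q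
      (FreeAlgebra.ι k (GenSym.vertex (Q.src a)) * FreeAlgebra.ι k (GenSym.arrow a))
      (FreeAlgebra.ι k (GenSym.arrow a))
  | mul_tgt (a : Q.A) : GentleRel k Q
      (FreeAlgebra.ι k (GenSym.arrow a) * FreeAlgebra.ι k (GenSym.vertex (Q.tgt a)))
      (FreeAlgebra.ι k (GenSym.arrow a))
  | relation (a b : Q.A) (h : Q.rel a b) : GentleRel k Q
      (FreeAlgebra.ι k (GenSym.arrow a) * FreeAlgebra.ι k (GenSym.arrow b)) 0

/-- The algebra `A = kQ/I` presented by the bound quiver `Q`. -/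
abbrev GentleAlgebra (k : Type) [Field k] (Q : GentleData) : Type :=
  RingQuot (GentleRel k Q)

/-- The image in `kQ/I` of a generator. -/
noncomputable def ofGen (k : Type) [Field k] (Q : GentleData) (x : GenSym Q) :
    GentleAlgebra k Q :=
  RingQuot.mkAlgHom k (GentleRel k Q) (FreeAlgebra.ι k x)

/-- The idempotent `e_v ∈ kQ/I` of a vertex `v`. -/
noncomputable def idemOf (k : Type) [Field k] (Q : GentleData) (v : Q.V) :
    GentleAlgebra k Q :=
  ofGen k Q (GenSym.vertex v)

/-- The element of `kQ/I` given by an arrow `a`. -/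
noncomputable def arrOf (k : Type) [Field k] (Q : GentleData) (a : Q.A) :
    GentleAlgebra k Q :=
  ofGen k Q (GenSym.arrow a)

/-- The indecomposable projective right module `e_v A`, as a right submodule
(i.e. `Aᵐᵒᵖ`-submodule) of `A`. -/
noncomputable def vertexModule (k : Type) [Field k] (Q : GentleData) (v : Q.V) :
    Submodule (GentleAlgebra k Q)ᵐᵒᵖ (GentleAlgebra k Q) :=
  Submodule.span (GentleAlgebra k Q)ᵐᵒᵖ {idemOf k Q v}

/-- The right module `αA` generated by an arrow `α`, as a right submodule of `A`. -/
noncomputable def arrowModule (k : Type) [Field k] (Q : GentleData) (a : Q.A) :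
    Submodule (GentleAlgebra k Q)ᵐᵒᵖ (GentleAlgebra k Q) :=
  Submodule.span (GentleAlgebra k Q)ᵐᵒᵖ {arrOf k Q a}

/-- An oriented cycle `c` of length `ℓ` with full relations:
`t(cᵢ) = s(cᵢ₊₁)` and `cᵢ cᵢ₊₁ ∈ I` for all `i` (indices modulo `ℓ`). -/
def IsOCFCycle (Q : GentleData) {ℓ : ℕ} (c : ZMod ℓ → Q.A) : Prop :=
  ∀ i : ZMod ℓ, Q.tgt (c i) = Q.src (c (i + 1)) ∧ Q.rel (c i) (c (i + 1))

/-- The arrow `a` lies on some oriented cycle with full relations. -/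
def OnOCFCycle (Q : GentleData) (a : Q.A) : Prop :=
  ∃ ℓ : ℕ, 1 ≤ ℓ ∧ ∃ c : ZMod ℓ → Q.A, IsOCFCycle Q c ∧ ∃ i : ZMod ℓ, c i = a

/-- The whole quiver `(Q, I)` is an oriented cycle of some length `ℓ ≥ 1` with
full relations. -/
def QuiverIsOCF (Q : GentleData) : Prop :=
  ∃ ℓ : ℕ, 1 ≤ ℓ ∧ ∃ (e : Q.V ≃ ZMod ℓ) (f : Q.A ≃ ZMod ℓ),
    (∀ a, e (Q.src a) = f a) ∧ (∀ a, e (Q.tgt a) = f a + 1) ∧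
    (∀ a b, Q.rel a b ↔ f b = f a + 1)

/-- The quiver `(Q, I)` is a single point: exactly one vertex and no arrows. -/
def QuiverIsPoint (Q : GentleData) : Prop :=
  (∃ v : Q.V, ∀ w : Q.V, w = v) ∧ IsEmpty Q.A

/-- `v` is a common vertex of two distinct oriented cycles with full relations. -/
def TwoCyclesAt (Q : GentleData) (v : Q.V) : Prop :=
  ∃ (ℓ ℓ' : ℕ), 1 ≤ ℓ ∧ 1 ≤ ℓ' ∧ ∃ (c : ZMod ℓ → Q.A) (c' : ZMod ℓ' → Q.A),
    IsOCFCycle Q c ∧ IsOCFCycle Q c' ∧ Function.Injective c ∧ Function.Injective c' ∧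
    (∃ i, Q.tgt (c i) = v) ∧ (∃ j, Q.tgt (c' j) = v) ∧ Set.range c ≠ Set.range c'

/-- The set of vertices lying on an oriented cycle with full relations. -/
def ocfVertexSet (Q : GentleData) : Set Q.V :=
  {v | ∃ a : Q.A, OnOCFCycle Q a ∧ Q.tgt a = v}

/-- Oriented cycles with full relations, identified up to cyclic rotation. -/
def ocfCycleSetoid (Q : GentleData) (ℓ : ℕ) :
    Setoid {c : ZMod ℓ → Q.A // IsOCFCycle Q c ∧ Function.Injective c} where
  r c c' := ∃ t : ZMod ℓ, ∀ i, c'.1 i = c.1 (i + t)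
  iseqv := by
    refine ⟨fun c => ⟨0, fun i => by rw [add_zero]⟩, ?_, ?_⟩
    · rintro c c' ⟨t, ht⟩
      exact ⟨-t, fun i => by rw [ht (i + -t), neg_add_cancel_right]⟩
    · rintro a b c ⟨t, ht⟩ ⟨s, hs⟩
      exact ⟨s + t, fun i => by rw [hs i, ht (i + s), add_assoc]⟩

/-- `AGzero Q ℓ` is the value `φ_A(0, ℓ)` of the AG-invariant: the number of
oriented cycles of length `ℓ` with full relations, counted up to rotation. -/
noncomputable def AGzero (Q : GentleData) (ℓ : ℕ) : ℕ :=
  Nat.card (Quotient (ocfCycleSetoid Q ℓ))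

/-- A (nontrivial) forbidden path with arrows `p 0, …, p (m-1)`:
all consecutive length-two subpaths lie in `I`. -/
def IsForbiddenPath (Q : GentleData) (m : ℕ) (p : ℕ → Q.A) : Prop :=
  ∀ i : ℕ, i + 1 < m → Q.tgt (p i) = Q.src (p (i + 1)) ∧ Q.rel (p i) (p (i + 1))

/-- A (nontrivial) forbidden thread: a maximal forbidden path (of `m ≥ 1`
arrows), i.e. one which cannot be extended on either side. -/
def IsForbiddenThread (Q : GentleData) (m : ℕ) (p : ℕ → Q.A) : Prop :=
  1 ≤ m ∧ IsForbiddenPath Q m p ∧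
  (∀ b : Q.A, Q.tgt b = Q.src (p 0) → ¬ Q.rel b (p 0)) ∧
  (∀ b : Q.A, Q.src b = Q.tgt (p (m - 1)) → ¬ Q.rel (p (m - 1)) b)

/-- A trivial forbidden thread at a vertex `v` (of length `0`). -/
def IsTrivialForbiddenThread (Q : GentleData) (v : Q.V) : Prop :=
  ({a : Q.A | Q.tgt a = v} = ∅) ∨ ({a : Q.A | Q.src a = v} = ∅) ∨
  (∃ b b' : Q.A, {a : Q.A | Q.tgt a = v} = {b} ∧ {a : Q.A | Q.src a = v} = {b'} ∧ ¬ Q.rel b b')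

/-- The set of lengths of the forbidden threads of finite length. -/
def finiteForbiddenThreadLengths (Q : GentleData) : Set ℕ∞ :=
  {n : ℕ∞ | (n = 0 ∧ ∃ v : Q.V, IsTrivialForbiddenThread Q v) ∨
    (∃ m : ℕ, n = (m : ℕ∞) ∧ ∃ p : ℕ → Q.A, IsForbiddenThread Q m p)}

/-- The set of lengths of all forbidden threads; an oriented cycle with full
relations gives rise to a forbidden thread of infinite length. -/
def forbiddenThreadLengths (Q : GentleData) : Set ℕ∞ :=
  finiteForbiddenThreadLengths Q ∪
    {n : ℕ∞ | n = ⊤ ∧ ∃ ℓ : ℕ, 1 ≤ ℓ ∧ ∃ c : ZMod ℓ → Q.A, IsOCFCycle Q c}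

section Dimensions

/-- `projDimLE R n M` : the `R`-module `M` admits a projective resolution of
length at most `n`. -/
def projDimLE (R : Type) [Ring R] (n : ℕ) (M : Type) [AddCommGroup M] [Module R M] : Prop :=
  ∃ (P : ℕ → ModuleCat.{0} R) (d : ∀ i : ℕ, ↥(P (i + 1)) →ₗ[R] ↥(P i)) (ε : ↥(P 0) →ₗ[R] M),
    (∀ i, Module.Projective R ↥(P i)) ∧
    Function.Surjective ε ∧ Function.Exact (d 0) ε ∧
    (∀ i, Function.Exact (d (i + 1)) (d i)) ∧
    (∀ i, n ≤ i → Subsingleton ↥(P (i + 1)))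

/-- `injDimLE R n M` : the `R`-module `M` admits an injective coresolution of
length at most `n`. -/
def injDimLE (R : Type) [Ring R] (n : ℕ) (M : Type) [AddCommGroup M] [Module R M] : Prop :=
  ∃ (E : ℕ → ModuleCat.{0} R) (d : ∀ i : ℕ, ↥(E i) →ₗ[R] ↥(E (i + 1))) (ι : M →ₗ[R] ↥(E 0)),
    (∀ i, Module.Injective R ↥(E i)) ∧
    Function.Injective ι ∧ Function.Exact ι (d 0) ∧
    (∀ i, Function.Exact (d i) (d (i + 1))) ∧
    (∀ i, n ≤ i → Subsingleton ↥(E (i + 1)))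

/-- The projective dimension of a module, in `ℕ∞`. -/
noncomputable def projDim (R : Type) [Ring R] (M : Type) [AddCommGroup M] [Module R M] : ℕ∞ :=
  sInf {n : ℕ∞ | ∃ m : ℕ, n = (m : ℕ∞) ∧ projDimLE R m M}

/-- The injective dimension of a module, in `ℕ∞`. -/
noncomputable def injDim (R : Type) [Ring R] (M : Type) [AddCommGroup M] [Module R M] : ℕ∞ :=
  sInf {n : ℕ∞ | ∃ m : ℕ, n = (m : ℕ∞) ∧ injDimLE R m M}

/-- The global dimension of a ring: the supremum of the projective dimensions
of all finitely generated modules. -/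
noncomputable def globalDim (R : Type) [Ring R] : ℕ∞ :=
  ⨆ (M : ModuleCat.{0} R) (_ : Module.Finite R ↥M), projDim R ↥M

/-- The left self-injective dimension: the injective dimension of `R` as a
left module over itself. -/
noncomputable def leftSelfInjDim (R : Type) [Ring R] : ℕ∞ := injDim R R

/-- The right self-injective dimension: the injective dimension of `R` as a
right module over itself. -/
noncomputable def rightSelfInjDim (R : Type) [Ring R] : ℕ∞ := injDim Rᵐᵒᵖ R

end Dimensions

section Radical

/-- The radical of a module: the intersection of its maximal submodules. -/
def radMod (R : Type) [Ring R] (M : Type) [AddCommGroup M] [Module R M] : Submodule R M :=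
  sInf {N : Submodule R M | IsCoatom N}

/-- The top of a module: the quotient by its radical. -/
abbrev topMod (R : Type) [Ring R] (M : Type) [AddCommGroup M] [Module R M] : Type :=
  M ⧸ radMod R M

/-- The socle of a module: the sum of its simple submodules. -/
def socMod (R : Type) [Ring R] (M : Type) [AddCommGroup M] [Module R M] : Submodule R M :=
  sSup {N : Submodule R M | IsAtom N}

/-- The simple right `A`-module `S(v)` at a vertex `v`, realized as the top of
the indecomposable projective `e_v A`. -/
noncomputable abbrev SimpleAt (k : Type) [Field k] (Q : GentleData) (v : Q.V) : Type :=
  topMod (GentleAlgebra k Q)ᵐᵒᵖ ↥(vertexModule k Q v)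

end Radical

section Gorenstein

/-- An indecomposable module: nontrivial, and admitting no nontrivial direct
sum decomposition. -/
def IndecomposableModule (R : Type) [Ring R] (M : Type) [AddCommGroup M] [Module R M] : Prop :=
  Nontrivial M ∧ ∀ N N' : Submodule R M, IsCompl N N' → N = ⊥ ∨ N' = ⊥

/-- A Gorenstein projective module: a syzygy of an acyclic complex of
projective modules which remains acyclic after applying `Hom(−, R)`. -/
def IsGorensteinProjective (R : Type) [Ring R] (G : Type) [AddCommGroup G] [Module R G] :
    Prop :=
  ∃ (P : ℤ → ModuleCat.{0} R) (d : ∀ n : ℤ, ↥(P n) →ₗ[R] ↥(P (n + 1))),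
    (∀ n, Module.Projective R ↥(P n)) ∧
    (∀ n, Function.Exact (d n) (d (n + 1))) ∧
    (∀ n : ℤ, Function.Exact
      (fun g : ↥(P (n + 1 + 1)) →ₗ[R] R => g ∘ₗ d (n + 1))
      (fun g : ↥(P (n + 1)) →ₗ[R] R => g ∘ₗ d n)) ∧
    Nonempty (G ≃ₗ[R] ↥(LinearMap.range (d (-1))))

/-- An indecomposable non-projective Gorenstein projective module. -/
def IsIndecNonProjGP (R : Type) [Ring R] (M : Type) [AddCommGroup M] [Module R M] : Prop :=
  IndecomposableModule R M ∧ IsGorensteinProjective R M ∧ ¬ Module.Projective R M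

/-- An indecomposable Gorenstein projective module. -/
def IsIndecGP (R : Type) [Ring R] (M : Type) [AddCommGroup M] [Module R M] : Prop :=
  IndecomposableModule R M ∧ IsGorensteinProjective R M

/-- Indecomposable non-projective Gorenstein projective right `A`-modules
(realized as right submodules of `A`), up to isomorphism. -/
noncomputable def npgpSetoid (k : Type) [Field k] (Q : GentleData) :
    Setoid {N : Submodule (GentleAlgebra k Q)ᵐᵒᵖ (GentleAlgebra k Q) //
      IsIndecNonProjGP (GentleAlgebra k Q)ᵐᵒᵖ ↥N} where
  r N N' := Nonempty (↥N.1 ≃ₗ[(GentleAlgebra k Q)ᵐᵒᵖ] ↥N'.1)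
  iseqv := ⟨fun _ => ⟨LinearEquiv.refl _ _⟩, fun ⟨e⟩ => ⟨e.symm⟩, fun ⟨e⟩ ⟨f⟩ => ⟨e.trans f⟩⟩

/-- The number of isomorphism classes of indecomposable non-projective
Gorenstein projective right `A`-modules. -/
noncomputable def numIndecNonProjGP (k : Type) [Field k] (Q : GentleData) : ℕ :=
  Nat.card (Quotient (npgpSetoid k Q))

/-- Indecomposable Gorenstein projective right `A`-modules (realized as right
submodules of `A`), up to isomorphism. -/
noncomputable def gpSetoid (k : Type) [Field k] (Q : GentleData) :
    Setoid {N : Submodule (GentleAlgebra k Q)ᵐᵒᵖ (GentleAlgebra k Q) //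
      IsIndecGP (GentleAlgebra k Q)ᵐᵒᵖ ↥N} where
  r N N' := Nonempty (↥N.1 ≃ₗ[(GentleAlgebra k Q)ᵐᵒᵖ] ↥N'.1)
  iseqv := ⟨fun _ => ⟨LinearEquiv.refl _ _⟩, fun ⟨e⟩ => ⟨e.symm⟩, fun ⟨e⟩ ⟨f⟩ => ⟨e.trans f⟩⟩

end Gorenstein

section Strings

/-- A walk in the quiver: `len` letters, the `i`-th letter (for `1 ≤ i ≤ len`)
joining the vertex `vtx (i-1)` to `vtx i`; a letter `(a, true)` is the arrow
`a` read forwards (direct), and `(a, false)` is its formal inverse. -/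
structure StrWalk (Q : GentleData) : Type where
  len : ℕ
  vtx : ℕ → Q.V
  letter : ℕ → Q.A × Bool

/-- The walk is a string: letters join consecutive vertices, the walk is
reduced (no `a a⁻` nor `a⁻ a`), and it avoids the relations. -/
def IsString (Q : GentleData) (w : StrWalk Q) : Prop :=
  (∀ i : ℕ, 1 ≤ i → i ≤ w.len →
    ((w.letter i).2 = true →
      Q.src (w.letter i).1 = w.vtx (i - 1) ∧ Q.tgt (w.letter i).1 = w.vtx i) ∧
    ((w.letter i).2 = false →
      Q.tgt (w.letter i).1 = w.vtx (i - 1) ∧ Q.src (w.letter i).1 = w.vtx i)) ∧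
  (∀ i : ℕ, 1 ≤ i → i + 1 ≤ w.len →
    (¬ ((w.letter i).1 = (w.letter (i + 1)).1 ∧ (w.letter i).2 ≠ (w.letter (i + 1)).2)) ∧
    ((w.letter i).2 = true → (w.letter (i + 1)).2 = true →
      ¬ Q.rel (w.letter i).1 (w.letter (i + 1)).1) ∧
    ((w.letter i).2 = false → (w.letter (i + 1)).2 = false →
      ¬ Q.rel (w.letter (i + 1)).1 (w.letter i).1))

/-- `M` is the string module `M(w)` of the string `w`: it has a `k`-basis
indexed by the vertices `0, …, len` of the walk, the idempotent of a vertex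
fixes exactly the basis vectors sitting at that vertex, and an arrow moves
basis vectors along the corresponding letters of the walk. -/
def IsStringModule (k : Type) [Field k] (Q : GentleData) (w : StrWalk Q) (M : Type)
    [AddCommGroup M] [Module k M] [Module (GentleAlgebra k Q)ᵐᵒᵖ M] : Prop :=
  (∀ (c : k) (m : M), (algebraMap k (GentleAlgebra k Q)ᵐᵒᵖ c) • m = c • m) ∧
  ∃ b : ℕ → M,
    LinearIndependent k (fun i : Fin (w.len + 1) => b i) ∧
    Submodule.span k (b '' {i : ℕ | i ≤ w.len}) = ⊤ ∧
    (∀ i : ℕ, i ≤ w.len → ∀ v : Q.V,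
      (op (idemOf k Q v)) • b i = if w.vtx i = v then b i else 0) ∧
    (∀ i : ℕ, i ≤ w.len → ∀ a : Q.A,
      (op (arrOf k Q a)) • b i =
        (if i + 1 ≤ w.len ∧ w.letter (i + 1) = (a, true) then b (i + 1) else 0) +
        (if 1 ≤ i ∧ w.letter i = (a, false) then b (i - 1) else 0))

/-- The vertex at position `i` is a source of the walk: the adjacent letters
point away from it. -/
def sourceAt (Q : GentleData) (w : StrWalk Q) (i : ℕ) : Prop :=
  i ≤ w.len ∧ (i = 0 ∨ (w.letter i).2 = false) ∧ (i = w.len ∨ (w.letter (i + 1)).2 = true)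

/-- The vertex at position `i` is a sink of the walk: the adjacent letters
point towards it. -/
def sinkAt (Q : GentleData) (w : StrWalk Q) (i : ℕ) : Prop :=
  i ≤ w.len ∧ (i = 0 ∨ (w.letter i).2 = true) ∧ (i = w.len ∨ (w.letter (i + 1)).2 = false)

/-- Left maximality of the inverse prefix (letters `1, …, i`) of a walk of the
shape "inverse prefix followed by direct suffix": the underlying direct path
out of the vertex at position `i` cannot be prolonged (and, when the prefix is
trivial, no second arrow leaves the starting vertex). -/
def LeftMaxAt (Q : GentleData) (w : StrWalk Q) (i : ℕ) : Prop :=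
  if 1 ≤ i then ∀ α : Q.A, Q.src α = w.vtx 0 → Q.rel (w.letter 1).1 α
  else ∀ α : Q.A, Q.src α = w.vtx 0 → (1 ≤ w.len ∧ α = (w.letter 1).1)

/-- Right maximality of the direct suffix (letters `i+1, …, len`) of a walk of
the shape "inverse prefix followed by direct suffix". -/
def RightMaxAt (Q : GentleData) (w : StrWalk Q) (i : ℕ) : Prop :=
  if i < w.len then ∀ β : Q.A, Q.src β = w.vtx w.len → Q.rel (w.letter w.len).1 β
  else ∀ β : Q.A, Q.src β = w.vtx w.len → (1 ≤ w.len ∧ β = (w.letter w.len).1)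

end Strings

section Homological

open CategoryTheory

variable {R : Type} [Ring R]

/-- Projective dimension at most `n`, via Mathlib's `Ext`-based notion. -/
def PdLE (R : Type) [Ring R] (n : ℕ) (M : Type) [AddCommGroup M] [Module R M] : Prop :=
  HasProjectiveDimensionLT (ModuleCat.of R M) (n + 1)

theorem shortExact_of {X Y Z : Type} [AddCommGroup X] [Module R X] [AddCommGroup Y] [Module R Y]
    [AddCommGroup Z] [Module R Z] (f : X →ₗ[R] Y) (g : Y →ₗ[R] Z) (hf : Function.Injective f)
    (hg : Function.Surjective g) (hfg : Function.Exact f g) :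
    (ShortComplex.mk (ModuleCat.ofHom f) (ModuleCat.ofHom g)
      (by ext x; exact hfg.apply_apply_eq_zero x)).ShortExact where
  exact := by
    rw [ShortComplex.ShortExact.moduleCat_exact_iff_function_exact]
    exact hfg
  mono_f := (ModuleCat.mono_iff_injective _).2 hf
  epi_g := (ModuleCat.epi_iff_surjective _).2 hg

theorem pdLE_zero_iff {M : Type} [AddCommGroup M] [Module R M] :
    PdLE R 0 M ↔ Module.Projective R M := by
  unfold PdLE
  rw [← projective_iff_hasProjectiveDimensionLT_one, ← IsProjective.iff_projective]

theorem PdLE.mono {n m : ℕ} {M : Type} [AddCommGroup M] [Module R M] (h : PdLE R n M)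
    (hnm : n ≤ m) : PdLE R m M := by
  unfold PdLE at *
  exact hasProjectiveDimensionLT_of_ge _ (n + 1) (m + 1) (by omega)

theorem PdLE.of_equiv {n : ℕ} {M N : Type} [AddCommGroup M] [Module R M] [AddCommGroup N]
    [Module R N] (h : PdLE R n M) (e : M ≃ₗ[R] N) : PdLE R n N := by
  unfold PdLE at *
  exact hasProjectiveDimensionLT_of_iso e.toModuleIso (n + 1)

theorem pdLE_of_subsingleton (n : ℕ) (M : Type) [AddCommGroup M] [Module R M] [Subsingleton M] :
    PdLE R n M := by
  refine PdLE.mono (pdLE_zero_iff.2 ?_) (Nat.zero_le n)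
  infer_instance

theorem pdLE_mid {n : ℕ} {X Y Z : Type} [AddCommGroup X] [Module R X] [AddCommGroup Y] [Module R Y]
    [AddCommGroup Z] [Module R Z] (f : X →ₗ[R] Y) (g : Y →ₗ[R] Z) (hf : Function.Injective f)
    (hg : Function.Surjective g) (hfg : Function.Exact f g) (hX : PdLE R n X) (hZ : PdLE R n Z) :
    PdLE R n Y :=
  (shortExact_of f g hf hg hfg).hasProjectiveDimensionLT_X₂ (n + 1) hX hZ

theorem pdLE_succ_iff {n : ℕ} {P M : Type} [AddCommGroup P] [Module R P] [AddCommGroup M]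
    [Module R M] (hP : Module.Projective R P) (g : P →ₗ[R] M) (hg : Function.Surjective g) :
    PdLE R (n + 1) M ↔ PdLE R n (LinearMap.ker g) :=
  (shortExact_of (LinearMap.ker g).subtype g (Submodule.subtype_injective _) hg
    (LinearMap.exact_subtype_ker_map g)).hasProjectiveDimensionLT_X₃_iff n
      ((IsProjective.iff_projective P).1 hP)

theorem pdLE_sub_quot {n : ℕ} {M : Type} [AddCommGroup M] [Module R M] (N : Submodule R M)
    (h1 : PdLE R n N) (h2 : PdLE R n (M ⧸ N)) : PdLE R n M :=
  pdLE_mid N.subtype N.mkQ (Submodule.subtype_injective _) (Submodule.mkQ_surjective _)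
    (LinearMap.exact_subtype_mkQ N) h1 h2

theorem pdLE_sup {n : ℕ} {M : Type} [AddCommGroup M] [Module R M] (p q : Submodule R M)
    (hpq : Disjoint p q) (hp : PdLE R n p) (hq : PdLE R n q) : PdLE R n ↥(p ⊔ q) := by
  refine pdLE_sub_quot (Submodule.comap (p ⊔ q).subtype q) ?_ ?_
  · exact hq.of_equiv (Submodule.comapSubtypeEquivOfLe le_sup_right).symm
  · refine PdLE.of_equiv ?_ (LinearMap.quotientInfEquivSupQuotient p q)
    refine hp.of_equiv (Submodule.quotEquivOfEqBot _ ?_).symm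
    rw [← Submodule.comap_inf, hpq.eq_bot]
    exact Submodule.ker_subtype p

theorem pdLE_of_projDimLE (n : ℕ) : ∀ (M : Type) [AddCommGroup M] [Module R M],
    projDimLE R n M → PdLE R n M := by
  induction n with
  | zero =>
    intro M _ _ ⟨P, d, ε, hP, hε, h0, h1, h2⟩
    have := h2 0 le_rfl
    have hinj : Function.Injective ε := by
      rw [injective_iff_map_eq_zero]
      intro x hx
      obtain ⟨y, rfl⟩ := (h0 x).1 hx
      rw [Subsingleton.elim y 0, map_zero]
    have : PdLE R 0 (P 0) := pdLE_zero_iff.2 (hP 0)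
    exact this.of_equiv (LinearEquiv.ofBijective ε ⟨hinj, hε⟩)
  | succ n ih =>
    intro M _ _ ⟨P, d, ε, hP, hε, h0, h1, h2⟩
    rw [pdLE_succ_iff (hP 0) ε hε]
    refine ih _ ⟨fun i => P (i + 1), fun i => d (i + 1),
      (d 0).codRestrict (LinearMap.ker ε) (fun x => h0.apply_apply_eq_zero x),
      fun i => hP _, ?_, ?_, fun i => h1 _, fun i hi => h2 _ (by omega)⟩
    · rintro ⟨x, hx⟩
      obtain ⟨y, rfl⟩ := (h0 x).1 hx
      exact ⟨y, rfl⟩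
    · intro x
      rw [← h1 0 x, Subtype.ext_iff]
      rfl

theorem projDimLE_of_pdLE (n : ℕ) : ∀ (M : Type) [AddCommGroup M] [Module R M],
    PdLE R n M → projDimLE R n M := by
  induction n with
  | zero =>
    intro M _ _ h
    rw [pdLE_zero_iff] at h
    refine ⟨fun i => Nat.casesOn i (ModuleCat.of R M) (fun _ => ModuleCat.of R PUnit),
      fun i => 0, LinearMap.id, ?_, Function.surjective_id, ?_, ?_, ?_⟩
    · rintro (_ | i)
      · exact h
      · change Module.Projective R PUnit
        infer_instance
    · intro x
      constructor
      · intro hx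
        exact ⟨0, hx.symm⟩
      · rintro ⟨y, rfl⟩
        rfl
    · intro i x
      constructor
      · intro hx
        exact ⟨0, rfl⟩
      · intro _
        rfl
    · intro i _
      change Subsingleton PUnit
      infer_instance
  | succ n ih =>
    intro M _ _ h
    let g : (M →₀ R) →ₗ[R] M := Finsupp.linearCombination R id
    have hg : Function.Surjective g := Finsupp.linearCombination_id_surjective R M
    have hF : Module.Projective R (M →₀ R) := inferInstance
    obtain ⟨P, d, ε, hP, hε, h0, h1, h2⟩ := ih _ ((pdLE_succ_iff hF g hg).1 h)
    refine ⟨fun i => Nat.casesOn i (ModuleCat.of R (M →₀ R)) P,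
      fun i => match i with
        | 0 => (LinearMap.ker g).subtype ∘ₗ ε
        | (i + 1) => d i, g, ?_, hg, ?_, ?_, ?_⟩
    · rintro (_ | i)
      · exact hF
      · exact hP i
    · intro x
      constructor
      · intro hx
        obtain ⟨y, hy⟩ := hε ⟨x, hx⟩
        exact ⟨y, congrArg Subtype.val hy⟩
      · rintro ⟨y, rfl⟩
        exact (ε y).2
    · rintro (_ | i)
      · intro x
        refine Iff.trans ?_ (h0 x)
        exact (Subtype.ext_iff (a1 := ε x) (a2 := 0)).symm
      · exact h1 i
    · rintro (_ | i) hi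
      · omega
      · exact h2 i (by omega)

end Homological

section Basics

variable (k : Type) [Field k] (Q : GentleData)

theorem idemOf_mul_self (v : Q.V) : idemOf k Q v * idemOf k Q v = idemOf k Q v := by
  have := RingQuot.mkAlgHom_rel k (GentleRel.idem (k := k) v)
  rwa [map_mul] at this

theorem idemOf_mul_of_ne {v w : Q.V} (h : v ≠ w) : idemOf k Q v * idemOf k Q w = 0 := by
  have := RingQuot.mkAlgHom_rel k (GentleRel.orth (k := k) v w h)
  rwa [map_mul, map_zero] at this

theorem sum_idemOf : ∑ v : Q.V, idemOf k Q v = 1 := by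
  have := RingQuot.mkAlgHom_rel k (GentleRel.sum_idem (k := k) (Q := Q))
  rwa [map_sum, map_one] at this

theorem idemOf_mul_arrOf (a : Q.A) : idemOf k Q (Q.src a) * arrOf k Q a = arrOf k Q a := by
  have := RingQuot.mkAlgHom_rel k (GentleRel.src_mul (k := k) a)
  rwa [map_mul] at this

theorem arrOf_mul_idemOf (a : Q.A) : arrOf k Q a * idemOf k Q (Q.tgt a) = arrOf k Q a := by
  have := RingQuot.mkAlgHom_rel k (GentleRel.mul_tgt (k := k) a)
  rwa [map_mul] at this

theorem arrOf_mul_of_rel {a b : Q.A} (h : Q.rel a b) : arrOf k Q a * arrOf k Q b = 0 := by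
  have := RingQuot.mkAlgHom_rel k (GentleRel.relation (k := k) a b h)
  rwa [map_mul, map_zero] at this

theorem idemOf_mul_arrOf_of_ne {v : Q.V} {a : Q.A} (h : v ≠ Q.src a) :
    idemOf k Q v * arrOf k Q a = 0 := by
  rw [← idemOf_mul_arrOf, ← mul_assoc, idemOf_mul_of_ne k Q h, zero_mul]

theorem arrOf_mul_arrOf_of_ne {a b : Q.A} (h : Q.tgt a ≠ Q.src b) :
    arrOf k Q a * arrOf k Q b = 0 := by
  rw [← arrOf_mul_idemOf, mul_assoc, idemOf_mul_arrOf_of_ne k Q h, mul_zero]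

variable {k Q}

theorem gentle_induction {p : GentleAlgebra k Q → Prop}
    (hk : ∀ c : k, p (algebraMap k _ c)) (hv : ∀ v, p (idemOf k Q v)) (ha : ∀ a, p (arrOf k Q a))
    (hadd : ∀ x y, p x → p y → p (x + y)) (hmul : ∀ x y, p x → p y → p (x * y))
    (x : GentleAlgebra k Q) : p x := by
  obtain ⟨y, rfl⟩ := RingQuot.mkAlgHom_surjective k (GentleRel k Q) x
  induction y using FreeAlgebra.induction with
  | grade0 r => rw [AlgHom.commutes]; exact hk r
  | grade1 g =>
    cases g with
    | vertex v => exact hv v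
    | arrow a => exact ha a
  | mul a b h1 h2 => rw [map_mul]; exact hmul _ _ h1 h2
  | add a b h1 h2 => rw [map_add]; exact hadd _ _ h1 h2

theorem exists_gentle_lift {B : Type} [Ring B] [Algebra k B] (f : Q.V → B) (g : Q.A → B)
    (h1 : ∀ v, f v * f v = f v) (h2 : ∀ v w, v ≠ w → f v * f w = 0) (h3 : ∑ v, f v = 1)
    (h4 : ∀ a, f (Q.src a) * g a = g a) (h5 : ∀ a, g a * f (Q.tgt a) = g a)
    (h6 : ∀ a b, Q.rel a b → g a * g b = 0) :
    ∃ φ : GentleAlgebra k Q →ₐ[k] B, (∀ v, φ (idemOf k Q v) = f v) ∧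
      ∀ a, φ (arrOf k Q a) = g a := by
  let F : FreeAlgebra k (GenSym Q) →ₐ[k] B :=
    FreeAlgebra.lift k (fun x => GenSym.casesOn x f g)
  have Fv : ∀ v, F (FreeAlgebra.ι k (GenSym.vertex v)) = f v := fun v => by
    simp [F]
  have Fa : ∀ v, F (FreeAlgebra.ι k (GenSym.arrow v)) = g v := fun v => by
    simp [F]
  have hF : ∀ ⦃x y⦄, GentleRel k Q x y → F x = F y := by
    intro x y h
    cases h with
    | idem v => rw [map_mul, Fv, h1]
    | orth v w h => rw [map_mul, Fv, Fv, h2 v w h, map_zero]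
    | sum_idem => simp only [map_sum, Fv, h3, map_one]
    | src_mul a => rw [map_mul, Fv, Fa, h4]
    | mul_tgt a => rw [map_mul, Fv, Fa, h5]
    | relation a b h => rw [map_mul, Fa, Fa, h6 a b h, map_zero]
  refine ⟨RingQuot.liftAlgHom k ⟨F, hF⟩, fun v => ?_, fun a => ?_⟩
  · unfold idemOf ofGen
    rw [RingQuot.liftAlgHom_mkAlgHom_apply, Fv]
  · unfold arrOf ofGen
    rw [RingQuot.liftAlgHom_mkAlgHom_apply, Fa]

/-- The augmentation at a vertex. -/
theorem exists_augmentation (v : Q.V) : ∃ ε : GentleAlgebra k Q →ₐ[k] k,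
    (∀ w, ε (idemOf k Q w) = if w = v then 1 else 0) ∧ ∀ a, ε (arrOf k Q a) = 0 := by
  apply exists_gentle_lift
  · intro w; split_ifs <;> simp
  · intro w w' h
    by_cases h1 : w = v
    · subst h1; simp [h.symm]
    · simp [h1]
  · simp
  · simp
  · simp
  · simp

/-- Fox derivative along an arrow, with values in a right module. -/
theorem exists_fox (a : Q.A) {N : Type} [AddCommGroup N] [Module k N]
    [Module (GentleAlgebra k Q)ᵐᵒᵖ N] [IsScalarTower k (GentleAlgebra k Q)ᵐᵒᵖ N] (n₀ : N)
    (h₀ : op (idemOf k Q (Q.tgt a)) • n₀ = n₀) (h₁ : ∀ b, Q.rel a b → op (arrOf k Q b) • n₀ = 0) :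
    ∃ (ε : GentleAlgebra k Q →ₐ[k] k) (D : GentleAlgebra k Q →ₗ[k] N),
      (∀ w, ε (idemOf k Q w) = if w = Q.src a then 1 else 0) ∧ (∀ b, ε (arrOf k Q b) = 0) ∧
      (∀ v, D (idemOf k Q v) = 0) ∧ (∀ b, D (arrOf k Q b) = if b = a then n₀ else 0) ∧
      (∀ x y, D (x * y) = op y • D x + ε x • D y) := by
  classical
  obtain ⟨ε, hεv, hεa⟩ := exists_augmentation (k := k) (Q := Q) (Q.src a)
  let ρ : (GentleAlgebra k Q)ᵐᵒᵖ →ₐ[k] Module.End k N := Algebra.lsmul k k N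
  have hρ : ∀ x n, ρ (op x) n = op x • n := fun x n => rfl
  let f : Q.V → (Module.End k (k × N))ᵐᵒᵖ := fun v =>
    op (LinearMap.prod ((if v = Q.src a then (1:k) else 0) • LinearMap.fst k k N)
      (ρ (op (idemOf k Q v)) ∘ₗ LinearMap.snd k k N))
  let g : Q.A → (Module.End k (k × N))ᵐᵒᵖ := fun b =>
    op (LinearMap.prod 0
      ((if b = a then (1:k) else 0) • (LinearMap.toSpanSingleton k N n₀ ∘ₗ LinearMap.fst k k N) +
        ρ (op (arrOf k Q b)) ∘ₗ LinearMap.snd k k N))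
  have hf : ∀ v c n, (f v).unop (c, n) = ((if v = Q.src a then c else 0), op (idemOf k Q v) • n) := by
    intro v c n
    by_cases h : v = Q.src a <;> simp [f, h, hρ]
  have hg : ∀ b c n, (g b).unop (c, n) = (0, (if b = a then c • n₀ else 0) + op (arrOf k Q b) • n) := by
    intro v c n
    by_cases h : v = a <;> simp [g, h, hρ]
  have ext' : ∀ x y : (Module.End k (k × N))ᵐᵒᵖ, (∀ c n, x.unop (c, n) = y.unop (c, n)) → x = y := by
    intro x y h
    apply unop_injective
    apply LinearMap.ext
    rintro ⟨c, n⟩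
    exact h c n
  obtain ⟨φ, hφv, hφa⟩ := exists_gentle_lift (k := k) (Q := Q) f g
    (by
      intro v
      apply ext'
      intro c n
      rw [unop_mul, Module.End.mul_apply, hf, hf, ← mul_smul, ← op_mul, idemOf_mul_self]
      split_ifs <;> rfl)
    (by
      intro v w h
      apply ext'
      intro c n
      rw [unop_mul, Module.End.mul_apply, hf, hf, ← mul_smul, ← op_mul, idemOf_mul_of_ne k Q h]
      by_cases hv : v = Q.src a
      · have : w ≠ Q.src a := fun h' => h (hv.trans h'.symm)
        simp [this]
      · simp [hv])
    (by
      apply ext'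
      intro c n
      have : (∑ v, f v).unop (c, n) = ∑ v, (f v).unop (c, n) := by
        rw [Finset.unop_sum, LinearMap.sum_apply]
      rw [this]
      simp only [hf]
      rw [unop_one, Module.End.one_apply]
      refine Prod.ext ?_ ?_
      · rw [Prod.fst_sum]; simp
      · rw [Prod.snd_sum]
        simp only
        rw [← Finset.sum_smul, ← Finset.op_sum, sum_idemOf, op_one, one_smul])
    (by
      intro b
      apply ext'
      intro c n
      rw [unop_mul, Module.End.mul_apply, hf, hg, hg, ← mul_smul, ← op_mul, idemOf_mul_arrOf]
      by_cases h : b = a <;> simp [h])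
    (by
      intro b
      apply ext'
      intro c n
      rw [unop_mul, Module.End.mul_apply, hg, hf, smul_add, ← mul_smul, ← op_mul, arrOf_mul_idemOf]
      by_cases h : b = a
      · subst h
        simp only [if_true, ite_self]
        rw [smul_comm, h₀]
      · simp [h])
    (by
      intro b b' hb
      apply ext'
      intro c n
      rw [unop_mul, Module.End.mul_apply, hg, hg, smul_add, ← mul_smul, ← op_mul,
        arrOf_mul_of_rel k Q hb]
      by_cases h : b = a
      · subst h
        simp only [if_true, ite_self]
        rw [smul_comm, h₁ b' hb]
        simp
      · simp [h])
  have key1 : ∀ x n, (φ x).unop (0, n) = (0, op x • n) := by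
    intro x
    induction x using gentle_induction with
    | hk c =>
      intro n
      rw [AlgHom.commutes]
      rw [MulOpposite.algebraMap_apply, unop_op, Module.algebraMap_end_apply]
      refine Prod.ext (by simp) ?_
      change c • n = _
      rw [← MulOpposite.algebraMap_apply, algebraMap_smul]
    | hv v => intro n; rw [hφv, hf]; simp
    | ha v => intro n; rw [hφa, hg]; simp
    | hadd x y h1 h2 =>
      intro n
      rw [map_add, unop_add, LinearMap.add_apply, h1, h2, op_add, add_smul]; simp
    | hmul x y h1 h2 =>
      intro n
      rw [map_mul, unop_mul, Module.End.mul_apply, h1, h2, op_mul, mul_smul]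
  have key2 : ∀ x, ((φ x).unop (1, 0)).1 = ε x := by
    have fst' : ∀ x c n, ((φ x).unop (c, n)).1 = ((φ x).unop (c, 0)).1 := by
      intro x c n
      have : ((c, n) : k × N) = (c, 0) + (0, n) := by simp
      rw [this, map_add, key1]
      simp
    have fst'' : ∀ x c, ((φ x).unop (c, 0)).1 = c * ((φ x).unop (1, 0)).1 := by
      intro x c
      have : ((c, 0) : k × N) = c • (1, 0) := by simp
      rw [this, map_smul]
      simp
    intro x
    induction x using gentle_induction with
    | hk c =>
      rw [AlgHom.commutes, AlgHom.commutes]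
      rw [MulOpposite.algebraMap_apply, unop_op, Module.algebraMap_end_apply]
      simp
    | hv v => rw [hφv, hf, hεv]
    | ha v => rw [hφa, hg, hεa]
    | hadd x y h1 h2 =>
      rw [map_add, map_add, unop_add, LinearMap.add_apply, Prod.fst_add, h1, h2]
    | hmul x y h1 h2 =>
      rw [map_mul, map_mul, unop_mul, Module.End.mul_apply, ← h1, ← h2]
      rw [← Prod.mk.eta (p := (φ x).unop (1, 0)), fst', fst'']
  let D : GentleAlgebra k Q →ₗ[k] N :=
    { toFun := fun x => ((φ x).unop (1, 0)).2
      map_add' := fun x y => by rw [map_add, unop_add, LinearMap.add_apply, Prod.snd_add]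
      map_smul' := fun c y => by rw [map_smul, unop_smul, LinearMap.smul_apply, Prod.smul_snd]; rfl }
  have hD : ∀ x, (φ x).unop (1, 0) = (ε x, D x) := fun x => Prod.ext (key2 x) rfl
  refine ⟨ε, D, hεv, hεa, ?_, ?_, ?_⟩
  · intro v
    change ((φ (idemOf k Q v)).unop (1, 0)).2 = 0
    rw [hφv, hf]; simp
  · intro v
    change ((φ (arrOf k Q v)).unop (1, 0)).2 = _
    rw [hφa, hg]; simp
  · intro x y
    change ((φ (x * y)).unop (1, 0)).2 = _
    rw [map_mul, unop_mul, Module.End.mul_apply, hD]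
    have : ((ε x, D x) : k × N) = ε x • (1, 0) + (0, D x) := by simp
    rw [this, map_add, map_smul, key1, hD, add_comm]
    simp

end Basics

section Ideals

variable {k : Type} [Field k] {Q : GentleData}

/-- The principal right ideal generated by `x`. -/
def rIdeal (x : GentleAlgebra k Q) : Submodule (GentleAlgebra k Q)ᵐᵒᵖ (GentleAlgebra k Q) :=
  LinearMap.range (LinearMap.mulLeft (GentleAlgebra k Q)ᵐᵒᵖ x)

theorem mem_rIdeal {x y : GentleAlgebra k Q} : y ∈ rIdeal x ↔ ∃ z, x * z = y := Iff.rfl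

theorem mul_mem_rIdeal (x z : GentleAlgebra k Q) : x * z ∈ rIdeal x := ⟨z, rfl⟩

theorem self_mem_rIdeal (x : GentleAlgebra k Q) : x ∈ rIdeal x := ⟨1, mul_one x⟩

theorem idemOf_mul_of_mem {v : Q.V} {x : GentleAlgebra k Q} (h : x ∈ rIdeal (idemOf k Q v)) :
    idemOf k Q v * x = x := by
  obtain ⟨z, rfl⟩ := mem_rIdeal.1 h
  rw [← mul_assoc, idemOf_mul_self]

theorem rIdeal_arrOf_le {a : Q.A} {v : Q.V} (h : Q.src a = v) :
    rIdeal (arrOf k Q a) ≤ rIdeal (idemOf k Q v) := by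
  subst h
  intro x hx
  obtain ⟨z, rfl⟩ := mem_rIdeal.1 hx
  rw [← idemOf_mul_arrOf, mul_assoc]
  exact mul_mem_rIdeal _ _

theorem projective_right_regular :
    Module.Projective (GentleAlgebra k Q)ᵐᵒᵖ (GentleAlgebra k Q) :=
  let e : (GentleAlgebra k Q)ᵐᵒᵖ ≃ₗ[(GentleAlgebra k Q)ᵐᵒᵖ] GentleAlgebra k Q :=
    { toFun := unop
      map_add' := fun _ _ => rfl
      map_smul' := fun _ _ => rfl
      invFun := op
      left_inv := fun _ => rfl
      right_inv := fun _ => rfl }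
  Module.Projective.of_equiv e

theorem projective_rIdeal_idemOf (v : Q.V) :
    Module.Projective (GentleAlgebra k Q)ᵐᵒᵖ (rIdeal (idemOf k Q v)) := by
  have := projective_right_regular (k := k) (Q := Q)
  refine Module.Projective.of_split (rIdeal (idemOf k Q v)).subtype
    (LinearMap.mulLeft (GentleAlgebra k Q)ᵐᵒᵖ (idemOf k Q v)).rangeRestrict ?_
  apply LinearMap.ext
  intro x
  apply Subtype.ext
  exact idemOf_mul_of_mem x.2

/-- The left annihilator computation. -/
theorem idemOf_mul_mem_of_arrOf_mul_eq_zero (a : Q.A) (y : GentleAlgebra k Q)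
    (h : arrOf k Q a * y = 0) :
    idemOf k Q (Q.tgt a) * y ∈ ⨆ b : {b // Q.rel a b}, rIdeal (arrOf k Q b.1) := by
  set I : Submodule (GentleAlgebra k Q)ᵐᵒᵖ (GentleAlgebra k Q) :=
    ⨆ b : {b // Q.rel a b}, rIdeal (arrOf k Q b.1) with hI
  obtain ⟨ε, D, -, hε, -, hD, hmul⟩ := exists_fox (k := k) a (N := GentleAlgebra k Q ⧸ I)
    (I.mkQ (idemOf k Q (Q.tgt a)))
    (by rw [← map_smul, op_smul_eq_mul, idemOf_mul_self])
    (by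
      intro b hb
      rw [← map_smul, op_smul_eq_mul, Submodule.mkQ_apply, Submodule.Quotient.mk_eq_zero]
      by_cases hs : Q.tgt a = Q.src b
      · rw [hs, idemOf_mul_arrOf]
        exact Submodule.mem_iSup_of_mem ⟨b, hb⟩ (self_mem_rIdeal _)
      · rw [idemOf_mul_arrOf_of_ne k Q hs]
        exact zero_mem _)
  have := hmul (arrOf k Q a) y
  rw [h, map_zero, hD, hε, if_pos rfl, zero_smul, add_zero, ← map_smul, op_smul_eq_mul] at this
  rw [← Submodule.Quotient.mk_eq_zero]
  exact this.symm

theorem disjoint_rIdeal (a : Q.A) (X : Finset Q.A) (ha : a ∉ X) :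
    Disjoint (rIdeal (arrOf k Q a)) (X.sup fun b => rIdeal (arrOf k Q b)) := by
  set I : Submodule (GentleAlgebra k Q)ᵐᵒᵖ (GentleAlgebra k Q) :=
    ⨆ b : {b // Q.rel a b}, rIdeal (arrOf k Q b.1) with hI
  obtain ⟨ε, D, -, hε, -, hD, hmul⟩ := exists_fox (k := k) a (N := GentleAlgebra k Q ⧸ I)
    (I.mkQ (idemOf k Q (Q.tgt a)))
    (by rw [← map_smul, op_smul_eq_mul, idemOf_mul_self])
    (by
      intro b hb
      rw [← map_smul, op_smul_eq_mul, Submodule.mkQ_apply, Submodule.Quotient.mk_eq_zero]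
      by_cases hs : Q.tgt a = Q.src b
      · rw [hs, idemOf_mul_arrOf]
        exact Submodule.mem_iSup_of_mem ⟨b, hb⟩ (self_mem_rIdeal _)
      · rw [idemOf_mul_arrOf_of_ne k Q hs]
        exact zero_mem _)
  have hker : ∀ x ∈ (X.sup fun b => rIdeal (arrOf k Q b)), D x = 0 := by
    induction X using Finset.induction_on with
    | empty =>
      intro x hx
      rw [Finset.sup_empty, Submodule.mem_bot] at hx
      rw [hx, map_zero]
    | insert b X hb ih =>
      intro x hx
      rw [Finset.sup_insert] at hx
      obtain ⟨y, hy, z, hz, rfl⟩ := Submodule.mem_sup.1 hx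
      rw [map_add, ih (fun h => ha (Finset.mem_insert_of_mem h)) z hz, add_zero]
      obtain ⟨w, rfl⟩ := mem_rIdeal.1 hy
      have hne : b ≠ a := fun h => ha (h ▸ Finset.mem_insert_self _ _)
      rw [hmul, hD, hε, if_neg hne, smul_zero, zero_smul, add_zero]
  have hI0 : I ≤ LinearMap.ker (LinearMap.mulLeft (GentleAlgebra k Q)ᵐᵒᵖ (arrOf k Q a)) := by
    refine iSup_le ?_
    rintro ⟨b, hb⟩ x hx
    obtain ⟨z, rfl⟩ := mem_rIdeal.1 hx
    change arrOf k Q a * (arrOf k Q b * z) = 0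
    rw [← mul_assoc, arrOf_mul_of_rel k Q hb, zero_mul]
  rw [Submodule.disjoint_def]
  intro x hx hx'
  obtain ⟨y, rfl⟩ := mem_rIdeal.1 hx
  have h0 := hker _ hx'
  rw [hmul, hD, hε, if_pos rfl, zero_smul, add_zero, ← map_smul, op_smul_eq_mul] at h0
  have h1 : idemOf k Q (Q.tgt a) * y ∈ I := (Submodule.Quotient.mk_eq_zero _).1 h0
  have h2 : arrOf k Q a * (idemOf k Q (Q.tgt a) * y) = 0 := hI0 h1
  rwa [← mul_assoc, arrOf_mul_idemOf] at h2

/-- The chosen augmentation at a vertex. -/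
noncomputable def aug (k : Type) [Field k] (Q : GentleData) (v : Q.V) : GentleAlgebra k Q →ₐ[k] k :=
  (exists_augmentation (k := k) v).choose

theorem aug_idemOf (v w : Q.V) : aug k Q v (idemOf k Q w) = if w = v then 1 else 0 :=
  (exists_augmentation (k := k) v).choose_spec.1 w

theorem aug_arrOf (v : Q.V) (a : Q.A) : aug k Q v (arrOf k Q a) = 0 :=
  (exists_augmentation (k := k) v).choose_spec.2 a

theorem eq_aug (v : Q.V) (ε : GentleAlgebra k Q →ₐ[k] k)
    (h1 : ∀ w, ε (idemOf k Q w) = if w = v then 1 else 0) (h2 : ∀ a, ε (arrOf k Q a) = 0) :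
    ε = aug k Q v := by
  apply AlgHom.ext
  intro x
  induction x using gentle_induction with
  | hk c => rw [AlgHom.commutes, AlgHom.commutes]
  | hv w => rw [h1, aug_idemOf]
  | ha a => rw [h2, aug_arrOf]
  | hadd x y hx hy => rw [map_add, map_add, hx, hy]
  | hmul x y hx hy => rw [map_mul, map_mul, hx, hy]

/-- The coefficient of an arrow. -/
theorem exists_coeff (a : Q.A) : ∃ D : GentleAlgebra k Q →ₗ[k] k,
    D (arrOf k Q a) = 1 ∧
      ∀ x y, D (x * y) = aug k Q (Q.tgt a) y * D x + aug k Q (Q.src a) x * D y := by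
  let _ : Module (GentleAlgebra k Q)ᵐᵒᵖ k :=
    Module.compHom k ((aug k Q (Q.tgt a)).toRingHom.fromOpposite (fun _ _ => Commute.all _ _))
  have hsm : ∀ (x : GentleAlgebra k Q) (n : k), op x • n = aug k Q (Q.tgt a) x * n :=
    fun _ _ => rfl
  have : IsScalarTower k (GentleAlgebra k Q)ᵐᵒᵖ k := by
    constructor
    intro c x n
    obtain ⟨x, rfl⟩ := op_surjective x
    rw [← op_smul, hsm, hsm, map_smul, smul_eq_mul, smul_eq_mul, mul_assoc]
  obtain ⟨ε, D, h1, h2, -, h4, h5⟩ := exists_fox (k := k) a (N := k) 1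
    (by rw [hsm, aug_idemOf, if_pos rfl, one_mul])
    (by intro b _; rw [hsm, aug_arrOf, zero_mul])
  refine ⟨D, by rw [h4, if_pos rfl], fun x y => ?_⟩
  rw [h5, hsm, eq_aug _ ε h1 h2, smul_eq_mul]

theorem no_section {a b : Q.A} (hab : Q.tgt a = Q.src b) (y : GentleAlgebra k Q)
    (h1 : arrOf k Q a * y = arrOf k Q a) (h2 : y * arrOf k Q b = 0) : False := by
  obtain ⟨D, hD1, hD2⟩ := exists_coeff (k := k) a
  obtain ⟨E, hE1, hE2⟩ := exists_coeff (k := k) b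
  have e1 := hD2 (arrOf k Q a) y
  rw [h1, hD1, aug_arrOf, zero_mul, add_zero, mul_one] at e1
  have e2 := hE2 y (arrOf k Q b)
  rw [h2, map_zero, hE1, aug_arrOf, zero_mul, zero_add, mul_one, ← hab, ← e1] at e2
  exact zero_ne_one e2

theorem decomp (y : GentleAlgebra k Q) : ∀ v : Q.V, ∃ (c : k) (z : Q.A → GentleAlgebra k Q),
    idemOf k Q v * y = c • idemOf k Q v +
      ∑ b ∈ Finset.univ.filter (fun b => Q.src b = v), arrOf k Q b * z b := by
  induction y using gentle_induction with
  | hk c =>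
    intro v
    refine ⟨c, 0, ?_⟩
    simp [Algebra.smul_def, Algebra.commutes]
  | hv w =>
    intro v
    by_cases h : v = w
    · subst h
      exact ⟨1, 0, by simp [idemOf_mul_self]⟩
    · exact ⟨0, 0, by simp [idemOf_mul_of_ne k Q h]⟩
  | ha a =>
    intro v
    by_cases h : Q.src a = v
    · subst h
      refine ⟨0, fun b => if b = a then 1 else 0, ?_⟩
      rw [idemOf_mul_arrOf]
      simp
    · exact ⟨0, 0, by simp [idemOf_mul_arrOf_of_ne k Q (Ne.symm h)]⟩
  | hadd x y hx hy =>
    intro v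
    obtain ⟨c, z, hz⟩ := hx v
    obtain ⟨c', z', hz'⟩ := hy v
    refine ⟨c + c', z + z', ?_⟩
    rw [mul_add, hz, hz', add_smul]
    simp only [Pi.add_apply, mul_add, Finset.sum_add_distrib]
    abel
  | hmul x y hx hy =>
    intro v
    obtain ⟨c, z, hz⟩ := hx v
    obtain ⟨c', z', hz'⟩ := hy v
    refine ⟨c * c', fun b => c • z' b + z b * y, ?_⟩
    rw [← mul_assoc, hz, add_mul, smul_mul_assoc, hz', smul_add, ← mul_smul, Finset.sum_mul]
    simp only [mul_add, Finset.sum_add_distrib, Finset.smul_sum, mul_smul_comm, mul_assoc, add_assoc]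

end Ideals

section General

theorem pdLE_succ_iff_of_ker {R : Type} [Ring R] {A M : Type} [AddCommGroup A] [Module R A]
    [AddCommGroup M] [Module R M] {n : ℕ} (E S : Submodule R A) (hP : Module.Projective R E)
    (hle : S ≤ E) (g : E →ₗ[R] M) (hg : Function.Surjective g)
    (hker : LinearMap.ker g = Submodule.comap E.subtype S) :
    PdLE R (n + 1) M ↔ PdLE R n S := by
  rw [pdLE_succ_iff hP g hg, hker]
  exact ⟨fun h => h.of_equiv (Submodule.comapSubtypeEquivOfLe hle),
    fun h => h.of_equiv (Submodule.comapSubtypeEquivOfLe hle).symm⟩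

end General

section Main

variable {k : Type} [Field k] {Q : GentleData}

theorem finite_of_gentle (hQ : IsGentle Q) : Module.Finite k (GentleAlgebra k Q) := by
  obtain ⟨-, -, -, -, -, -, -, N, hN⟩ := hQ
  have wf : WellFounded (fun b a : Q.A => Q.tgt a = Q.src b ∧ ¬ Q.rel a b) := by
    rw [wellFounded_iff_isEmpty_descending_chain]
    constructor
    rintro ⟨f, hf⟩
    exact hN f (fun i _ => hf i)
  have key : ∀ a : Q.A,
      FiniteDimensional k (LinearMap.range (LinearMap.mulLeft k (arrOf k Q a))) := by
    intro a
    induction a using wf.induction with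
    | _ a ih =>
      have ih' : ∀ b : {b : Q.A // Q.tgt a = Q.src b ∧ ¬ Q.rel a b}, FiniteDimensional k
          (Submodule.map (LinearMap.mulLeft k (arrOf k Q a))
            (LinearMap.range (LinearMap.mulLeft k (arrOf k Q b.1)))) := by
        intro b
        have := ih b.1 b.2
        infer_instance
      refine Submodule.finiteDimensional_of_le (S₂ := Submodule.span k {arrOf k Q a} ⊔
        ⨆ b : {b : Q.A // Q.tgt a = Q.src b ∧ ¬ Q.rel a b},
          Submodule.map (LinearMap.mulLeft k (arrOf k Q a))
            (LinearMap.range (LinearMap.mulLeft k (arrOf k Q b.1)))) ?_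
      rintro _ ⟨y, rfl⟩
      have hy : arrOf k Q a * y = arrOf k Q a * (idemOf k Q (Q.tgt a) * y) := by
        rw [← mul_assoc, arrOf_mul_idemOf]
      rw [LinearMap.mulLeft_apply, hy]
      obtain ⟨c, z, hz⟩ := decomp y (Q.tgt a)
      rw [hz, mul_add, mul_smul_comm, Finset.mul_sum]
      refine add_mem ?_ (sum_mem ?_)
      · apply Submodule.mem_sup_left
        rw [arrOf_mul_idemOf]
        exact Submodule.smul_mem _ _ (Submodule.mem_span_singleton_self _)
      · intro b hb
        rw [Finset.mem_filter] at hb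
        by_cases hr : Q.rel a b
        · rw [← mul_assoc, arrOf_mul_of_rel k Q hr, zero_mul]
          exact zero_mem _
        · apply Submodule.mem_sup_right
          exact Submodule.mem_iSup_of_mem ⟨b, hb.2.symm, hr⟩ ⟨_, ⟨z b, rfl⟩, rfl⟩
  have htop : FiniteDimensional k (⊤ : Submodule k (GentleAlgebra k Q)) := by
    refine Submodule.finiteDimensional_of_le (S₂ := (⨆ v, Submodule.span k {idemOf k Q v}) ⊔
        ⨆ b, LinearMap.range (LinearMap.mulLeft k (arrOf k Q b))) ?_
    intro y _
    rw [← one_mul y, ← sum_idemOf, Finset.sum_mul]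
    refine sum_mem fun v _ => ?_
    obtain ⟨c, z, hz⟩ := decomp y v
    rw [hz]
    refine add_mem ?_ (sum_mem ?_)
    · apply Submodule.mem_sup_left
      exact Submodule.mem_iSup_of_mem v
        (Submodule.smul_mem _ _ (Submodule.mem_span_singleton_self _))
    · intro b hb
      apply Submodule.mem_sup_right
      exact Submodule.mem_iSup_of_mem b ⟨z b, rfl⟩
  exact Module.Finite.equiv (Submodule.topEquiv (R := k) (M := GentleAlgebra k Q))

/-- The projective cover of the right ideal of an arrow. -/
noncomputable def arrowCover (k : Type) [Field k] (Q : GentleData) (a : Q.A) :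
    rIdeal (idemOf k Q (Q.tgt a)) →ₗ[(GentleAlgebra k Q)ᵐᵒᵖ] rIdeal (arrOf k Q a) :=
  (LinearMap.mulLeft (GentleAlgebra k Q)ᵐᵒᵖ (arrOf k Q a)).rangeRestrict ∘ₗ
    (rIdeal (idemOf k Q (Q.tgt a))).subtype

theorem arrowCover_coe (a : Q.A) (x : rIdeal (idemOf k Q (Q.tgt a))) :
    (arrowCover k Q a x : GentleAlgebra k Q) = arrOf k Q a * x := rfl

theorem arrowCover_surjective (a : Q.A) : Function.Surjective (arrowCover k Q a) := by
  rintro ⟨_, y, rfl⟩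
  refine ⟨⟨idemOf k Q (Q.tgt a) * y, mul_mem_rIdeal _ _⟩, Subtype.ext ?_⟩
  rw [arrowCover_coe, ← mul_assoc, arrOf_mul_idemOf]
  rfl

theorem ker_arrowCover_le (a : Q.A) (x : rIdeal (idemOf k Q (Q.tgt a)))
    (hx : x ∈ LinearMap.ker (arrowCover k Q a)) :
    (x : GentleAlgebra k Q) ∈ ⨆ b : {b // Q.rel a b}, rIdeal (arrOf k Q b.1) := by
  rw [← idemOf_mul_of_mem x.2]
  apply idemOf_mul_mem_of_arrOf_mul_eq_zero
  rw [← arrowCover_coe, LinearMap.mem_ker.1 hx]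
  rfl

theorem rel_unique (hQ : IsGentle Q) {a b b' : Q.A} (h : Q.rel a b) (h' : Q.rel a b') :
    b = b' := by
  obtain ⟨h0, -, -, -, -, -, h6, -⟩ := hQ
  have := h6 a
  rw [Set.ncard_le_one] at this
  exact this b ⟨(h0 _ _ h).symm, h⟩ b' ⟨(h0 _ _ h').symm, h'⟩

theorem pdLE_arrow_succ_iff (hQ : IsGentle Q) {a b : Q.A} (h : Q.rel a b) (n : ℕ) :
    PdLE (GentleAlgebra k Q)ᵐᵒᵖ (n + 1) (rIdeal (arrOf k Q a)) ↔
      PdLE (GentleAlgebra k Q)ᵐᵒᵖ n (rIdeal (arrOf k Q b)) := by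
  have hle : rIdeal (arrOf k Q b) ≤ rIdeal (idemOf k Q (Q.tgt a)) :=
    rIdeal_arrOf_le (hQ.1 _ _ h).symm
  have hker : LinearMap.ker (arrowCover k Q a) =
      Submodule.comap (rIdeal (idemOf k Q (Q.tgt a))).subtype (rIdeal (arrOf k Q b)) := by
    apply le_antisymm
    · intro x hx
      have := ker_arrowCover_le a x hx
      refine (iSup_le (a := rIdeal (arrOf k Q b)) ?_) this
      rintro ⟨b', hb'⟩
      rw [rel_unique hQ h hb']
    · rintro x ⟨z, hz⟩
      rw [LinearMap.mem_ker]
      apply Subtype.ext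
      rw [arrowCover_coe]
      change arrOf k Q b * z = x at hz
      rw [← hz, ← mul_assoc, arrOf_mul_of_rel k Q h, zero_mul]
      rfl
  exact pdLE_succ_iff_of_ker (R := (GentleAlgebra k Q)ᵐᵒᵖ) (A := GentleAlgebra k Q)
    (M := rIdeal (arrOf k Q a)) (rIdeal (idemOf k Q (Q.tgt a)))
    (rIdeal (arrOf k Q b)) (projective_rIdeal_idemOf (Q.tgt a)) hle (arrowCover k Q a)
    (arrowCover_surjective a) hker

theorem pdLE_arrow_of_none {a : Q.A} (h : ∀ b, ¬ Q.rel a b) (n : ℕ) :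
    PdLE (GentleAlgebra k Q)ᵐᵒᵖ (n + 1) (rIdeal (arrOf k Q a)) := by
  refine (pdLE_succ_iff_of_ker (R := (GentleAlgebra k Q)ᵐᵒᵖ) (A := GentleAlgebra k Q)
    (M := rIdeal (arrOf k Q a)) (rIdeal (idemOf k Q (Q.tgt a)))
    ⊥ (projective_rIdeal_idemOf (Q.tgt a)) bot_le (arrowCover k Q a)
    (arrowCover_surjective a) ?_).2 (pdLE_of_subsingleton _ _)
  apply le_antisymm
  · intro x hx
    have := ker_arrowCover_le a x hx
    have hE : IsEmpty {b // Q.rel a b} := ⟨fun b => h b.1 b.2⟩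
    rw [iSup_of_empty] at this
    exact this
  · intro x hx
    have hx0 : x = 0 := Subtype.ext ((Submodule.mem_bot (GentleAlgebra k Q)ᵐᵒᵖ).1 hx)
    rw [hx0]
    exact zero_mem _

theorem not_pdLE_zero (hQ : IsGentle Q) {a b : Q.A} (h : Q.rel a b) :
    ¬ PdLE (GentleAlgebra k Q)ᵐᵒᵖ 0 (rIdeal (arrOf k Q a)) := by
  rw [pdLE_zero_iff]
  intro hP
  obtain ⟨s, hs⟩ := Module.projective_lifting_property (arrowCover k Q a) LinearMap.id
    (arrowCover_surjective a)
  let a' : rIdeal (arrOf k Q a) := ⟨arrOf k Q a, self_mem_rIdeal _⟩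
  refine no_section (hQ.1 _ _ h) (s a' : GentleAlgebra k Q) ?_ ?_
  · rw [← arrowCover_coe]
    exact congrArg Subtype.val (LinearMap.congr_fun hs a')
  · have h1 : op (arrOf k Q b) • a' = 0 := Subtype.ext (arrOf_mul_of_rel k Q h)
    have h2 : op (arrOf k Q b) • s a' = 0 := by rw [← map_smul, h1, map_zero]
    exact congrArg Subtype.val h2

theorem not_pdLE_of_cycle (hQ : IsGentle Q) {ℓ : ℕ} (c : ZMod ℓ → Q.A) (hc : IsOCFCycle Q c)
    (n : ℕ) : ∀ i, ¬ PdLE (GentleAlgebra k Q)ᵐᵒᵖ n (rIdeal (arrOf k Q (c i))) := by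
  induction n with
  | zero => exact fun i => not_pdLE_zero hQ (hc i).2
  | succ n ih =>
    intro i h
    rw [pdLE_arrow_succ_iff hQ (hc i).2] at h
    exact ih _ h

theorem exists_cycle_of_chain (f : ℕ → Q.A) (h0 : ∀ a b, Q.rel a b → Q.tgt a = Q.src b)
    (hf : ∀ i, Q.rel (f i) (f (i + 1))) :
    ∃ ℓ : ℕ, 1 ≤ ℓ ∧ ∃ c : ZMod ℓ → Q.A, IsOCFCycle Q c := by
  obtain ⟨i, j, hij, hfij⟩ := Finite.exists_ne_map_eq_of_infinite f
  wlog hlt : i < j generalizing i j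
  · exact this j i hij.symm hfij.symm (by omega)
  obtain ⟨ℓ, rfl⟩ : ∃ ℓ, j = i + (ℓ + 1) := ⟨j - i - 1, by omega⟩
  refine ⟨ℓ + 1, by omega, fun x => f (i + x.val), fun x => ?_⟩
  have key : f (i + (x + 1).val) = f (i + x.val + 1) := by
    by_cases hx : x.val = ℓ
    · have : x + 1 = 0 := by
        rw [← ZMod.natCast_zmod_val x, hx]
        have := ZMod.natCast_self (ℓ + 1)
        push_cast at this
        exact this
      rw [this, ZMod.val_zero, add_zero, hx, hfij]
      rfl
    · have hlt := ZMod.val_lt x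
      have h1 : x + 1 = ((x.val + 1 : ℕ) : ZMod (ℓ + 1)) := by
        rw [Nat.cast_add, ZMod.natCast_zmod_val, Nat.cast_one]
      rw [h1, ZMod.val_cast_of_lt (by omega)]
      rfl
  have : Q.rel (f (i + x.val)) (f (i + (x + 1).val)) := by
    rw [key]
    exact hf _
  exact ⟨h0 _ _ this, this⟩

theorem exists_bound_arrow (hQ : IsGentle Q)
    (hno : ¬ ∃ ℓ : ℕ, 1 ≤ ℓ ∧ ∃ c : ZMod ℓ → Q.A, IsOCFCycle Q c) :
    ∃ N, ∀ a, PdLE (GentleAlgebra k Q)ᵐᵒᵖ N (rIdeal (arrOf k Q a)) := by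
  have wf : WellFounded (fun b a : Q.A => Q.rel a b) := by
    rw [wellFounded_iff_isEmpty_descending_chain]
    constructor
    rintro ⟨f, hf⟩
    exact hno (exists_cycle_of_chain f hQ.1 hf)
  have key : ∀ a, ∃ n, PdLE (GentleAlgebra k Q)ᵐᵒᵖ n (rIdeal (arrOf k Q a)) := by
    intro a
    induction a using wf.induction with
    | _ a ih =>
      by_cases h : ∃ b, Q.rel a b
      · obtain ⟨b, hb⟩ := h
        obtain ⟨n, hn⟩ := ih b hb
        exact ⟨n + 1, (pdLE_arrow_succ_iff hQ hb n).2 hn⟩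
      · exact ⟨1, pdLE_arrow_of_none (fun b hb => h ⟨b, hb⟩) 0⟩
  choose n hn using key
  exact ⟨Finset.univ.sup n, fun a => (hn a).mono (Finset.le_sup (Finset.mem_univ a))⟩

theorem pdLE_finset_sup {N : ℕ}
    (hN : ∀ a, PdLE (GentleAlgebra k Q)ᵐᵒᵖ N (rIdeal (arrOf k Q a))) (X : Finset Q.A) :
    PdLE (GentleAlgebra k Q)ᵐᵒᵖ N ↥(X.sup fun b => rIdeal (arrOf k Q b)) := by
  induction X using Finset.induction_on with
  | empty =>
    rw [Finset.sup_empty]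
    exact pdLE_of_subsingleton _ _
  | insert b X hb ih =>
    rw [Finset.sup_insert]
    exact pdLE_sup _ _ (disjoint_rIdeal b X hb) (hN b) ih

theorem exists_socle_vector (hQ : IsGentle Q) (M : Type) [AddCommGroup M]
    [Module (GentleAlgebra k Q)ᵐᵒᵖ M] [Nontrivial M] :
    ∃ (v : Q.V) (m : M), m ≠ 0 ∧ op (idemOf k Q v) • m = m ∧ ∀ a, op (arrOf k Q a) • m = 0 := by
  obtain ⟨-, -, -, -, -, -, -, N, hN⟩ := hQ
  by_contra hcon
  push Not at hcon
  let T : Type := {m : M // m ≠ 0 ∧ ∃ v, op (idemOf k Q v) • m = m}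
  have step : ∀ t : T, ∃ a, op (arrOf k Q a) • t.1 ≠ 0 := by
    rintro ⟨m, hm, v, hv⟩
    exact hcon v m hm hv
  choose α hα using step
  let nxt : T → T := fun t => ⟨op (arrOf k Q (α t)) • t.1, hα t, Q.tgt (α t), by
    rw [← mul_smul, ← op_mul, arrOf_mul_idemOf]⟩
  obtain ⟨m, hm⟩ := exists_ne (0 : M)
  have : ∃ v, op (idemOf k Q v) • m ≠ 0 := by
    by_contra h
    push Not at h
    apply hm
    rw [← one_smul (GentleAlgebra k Q)ᵐᵒᵖ m, ← op_one, ← sum_idemOf, Finset.op_sum, Finset.sum_smul]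
    exact Finset.sum_eq_zero fun v _ => h v
  obtain ⟨v, hv⟩ := this
  let t₀ : T := ⟨op (idemOf k Q v) • m, hv, v, by rw [← mul_smul, ← op_mul, idemOf_mul_self]⟩
  let s : ℕ → T := fun i => nxt^[i] t₀
  have hs : ∀ i, (s (i + 1)).1 = op (arrOf k Q (α (s i))) • (s i).1 := by
    intro i
    change (nxt^[i + 1] t₀).1 = _
    rw [Function.iterate_succ_apply']
  refine hN (fun i => α (s i)) (fun i _ => ?_)
  have hne : op (arrOf k Q (α (s i)) * arrOf k Q (α (s (i + 1)))) • (s i).1 ≠ 0 := by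
    rw [op_mul, mul_smul, ← hs]
    exact hα _
  constructor
  · by_contra h
    rw [arrOf_mul_arrOf_of_ne k Q h] at hne
    simp at hne
  · intro h
    rw [arrOf_mul_of_rel k Q h] at hne
    simp at hne

theorem pdLE_simple (hQ : IsGentle Q) {N : ℕ}
    (hN : ∀ a, PdLE (GentleAlgebra k Q)ᵐᵒᵖ N (rIdeal (arrOf k Q a))) (M : Type) [AddCommGroup M]
    [Module (GentleAlgebra k Q)ᵐᵒᵖ M] [IsSimpleModule (GentleAlgebra k Q)ᵐᵒᵖ M] :
    PdLE (GentleAlgebra k Q)ᵐᵒᵖ (N + 1) M := by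
  have : Nontrivial M := IsSimpleModule.nontrivial (GentleAlgebra k Q)ᵐᵒᵖ M
  obtain ⟨v, m, hm, hv, ha⟩ := exists_socle_vector (k := k) hQ M
  let g₀ : GentleAlgebra k Q →ₗ[(GentleAlgebra k Q)ᵐᵒᵖ] M :=
    { toFun := fun x => op x • m
      map_add' := fun x y => by rw [op_add, add_smul]
      map_smul' := fun r x => by
        rw [← op_unop r, op_smul_eq_mul, op_mul, mul_smul]; rfl }
  let g := g₀ ∘ₗ (rIdeal (idemOf k Q v)).subtype
  have hg : ∀ x, g x = op (x : GentleAlgebra k Q) • m := fun _ => rfl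
  have hsurj : Function.Surjective g := by
    rcases LinearMap.surjective_or_eq_zero (R := (GentleAlgebra k Q)ᵐᵒᵖ)
      (M := rIdeal (idemOf k Q v)) (N := M) g with h | h
    · exact h
    · exfalso
      have := LinearMap.congr_fun h ⟨idemOf k Q v, self_mem_rIdeal _⟩
      rw [hg, hv] at this
      exact hm this
  set X := Finset.univ.filter (fun b => Q.src b = v) with hX
  have hle : (X.sup fun b => rIdeal (arrOf k Q b)) ≤ rIdeal (idemOf k Q v) := by
    refine Finset.sup_le fun b hb => rIdeal_arrOf_le ?_
    exact (Finset.mem_filter.1 hb).2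
  have hker : LinearMap.ker g = Submodule.comap (rIdeal (idemOf k Q v)).subtype
      (X.sup fun b => rIdeal (arrOf k Q b)) := by
    apply le_antisymm
    · rintro ⟨x, hx⟩ hxg
      rw [LinearMap.mem_ker, hg] at hxg
      simp only at hxg
      change x ∈ X.sup fun b => rIdeal (arrOf k Q b)
      obtain ⟨y, rfl⟩ := mem_rIdeal.1 hx
      obtain ⟨c, z, hz⟩ := decomp y v
      have hsum : ∑ b ∈ X, arrOf k Q b * z b ∈ X.sup fun b => rIdeal (arrOf k Q b) :=
        sum_mem fun b hb => Finset.le_sup (f := fun b => rIdeal (arrOf k Q b)) hb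
          (mul_mem_rIdeal _ _)
      have hsum0 : op (∑ b ∈ X, arrOf k Q b * z b) • m = 0 := by
        rw [Finset.op_sum, Finset.sum_smul]
        refine Finset.sum_eq_zero fun b _ => ?_
        rw [op_mul, mul_smul, ha, smul_zero]
      rw [hz] at hxg ⊢
      rw [op_add, add_smul, hsum0, add_zero] at hxg
      have hc : c = 0 := by
        by_contra hc
        apply hm
        have h1 : op (algebraMap k (GentleAlgebra k Q) c) • m = 0 := by
          rw [← hxg, Algebra.smul_def, Algebra.commutes, op_mul, mul_smul, hv]
        rw [← one_smul (GentleAlgebra k Q)ᵐᵒᵖ m, ← op_one, ← map_one (algebraMap k _),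
          ← mul_inv_cancel₀ hc, map_mul, op_mul, mul_smul, h1, smul_zero]
      rw [hc, zero_smul, zero_add]
      exact hsum
    · have h0 : (X.sup fun b => rIdeal (arrOf k Q b)) ≤ LinearMap.ker g₀ := by
        refine Finset.sup_le fun b _ => ?_
        rintro _ ⟨z, rfl⟩
        change op (arrOf k Q b * z) • m = 0
        rw [op_mul, mul_smul, ha, smul_zero]
      intro x hx
      exact h0 hx
  exact (pdLE_succ_iff_of_ker (R := (GentleAlgebra k Q)ᵐᵒᵖ) (A := GentleAlgebra k Q)
    (M := M) (rIdeal (idemOf k Q v)) (X.sup fun b => rIdeal (arrOf k Q b))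
    (projective_rIdeal_idemOf v) hle g hsurj hker).2 (pdLE_finset_sup hN X)

theorem pdLE_of_finite (hQ : IsGentle Q) {N : ℕ}
    (hN : ∀ a, PdLE (GentleAlgebra k Q)ᵐᵒᵖ N (rIdeal (arrOf k Q a))) (M : Type) [AddCommGroup M]
    [Module (GentleAlgebra k Q)ᵐᵒᵖ M] [Module.Finite (GentleAlgebra k Q)ᵐᵒᵖ M] :
    PdLE (GentleAlgebra k Q)ᵐᵒᵖ (N + 1) M := by
  have h1 := finite_of_gentle (k := k) hQ
  have h2 : Module.Finite k (GentleAlgebra k Q)ᵐᵒᵖ :=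
    Module.Finite.equiv (MulOpposite.opLinearEquiv k)
  have h3 : IsArtinianRing (GentleAlgebra k Q)ᵐᵒᵖ := IsArtinianRing.of_finite k _
  have h4 : IsNoetherianRing (GentleAlgebra k Q)ᵐᵒᵖ := IsNoetherianRing.of_finite k _
  have h5 : IsFiniteLength (GentleAlgebra k Q)ᵐᵒᵖ M :=
    isFiniteLength_iff_isNoetherian_isArtinian.2 ⟨inferInstance, inferInstance⟩
  induction h5 with
  | of_subsingleton => exact pdLE_of_subsingleton _ _
  | @of_simple_quotient M _ _ S _ _ ih =>
    exact pdLE_sub_quot S ih (pdLE_simple hQ hN _)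

theorem finite_rIdeal (x : GentleAlgebra k Q) :
    Module.Finite (GentleAlgebra k Q)ᵐᵒᵖ (rIdeal x) := by
  let e : (GentleAlgebra k Q)ᵐᵒᵖ ≃ₗ[(GentleAlgebra k Q)ᵐᵒᵖ] GentleAlgebra k Q :=
    { toFun := unop
      map_add' := fun _ _ => rfl
      map_smul' := fun _ _ => rfl
      invFun := op
      left_inv := fun _ => rfl
      right_inv := fun _ => rfl }
  have h : Module.Finite (GentleAlgebra k Q)ᵐᵒᵖ (GentleAlgebra k Q) := Module.Finite.equiv e
  exact Module.Finite.of_surjective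
    (LinearMap.mulLeft (GentleAlgebra k Q)ᵐᵒᵖ x).rangeRestrict
    (LinearMap.surjective_rangeRestrict _)

end Main

/-- Let `A = kQ/I` be a gentle algebra. Then the global
dimension of `A` is infinite if and only if the bound quiver `(Q, I)` contains
at least one oriented cycle with full relations. -/
theorem globalDim_eq_top_iff_exists_ocf_cycle
    (k : Type) [Field k] [IsAlgClosed k] (Q : GentleData) (hQ : IsGentle Q) :
    globalDim (GentleAlgebra k Q)ᵐᵒᵖ = ⊤ ↔
      ∃ ℓ : ℕ, 1 ≤ ℓ ∧ ∃ c : ZMod ℓ → Q.A, IsOCFCycle Q c := by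
  constructor
  · intro h
    by_contra hno
    obtain ⟨N, hN⟩ := exists_bound_arrow (k := k) hQ hno
    have hle : globalDim (GentleAlgebra k Q)ᵐᵒᵖ ≤ ((N + 1 : ℕ) : ℕ∞) := by
      unfold globalDim
      refine iSup_le fun M => iSup_le fun hM => ?_
      exact sInf_le ⟨N + 1, rfl, projDimLE_of_pdLE _ _ (pdLE_of_finite hQ hN _)⟩
    rw [h] at hle
    exact ENat.natCast_ne_top _ (top_le_iff.1 hle)
  · rintro ⟨ℓ, hℓ, c, hc⟩
    have hfin : Module.Finite (GentleAlgebra k Q)ᵐᵒᵖ (rIdeal (arrOf k Q (c 0))) :=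
      finite_rIdeal _
    have htop : projDim (GentleAlgebra k Q)ᵐᵒᵖ (rIdeal (arrOf k Q (c 0))) = ⊤ := by
      unfold projDim
      rw [sInf_eq_top]
      rintro _ ⟨m, rfl, hm⟩
      exact absurd (pdLE_of_projDimLE _ _ hm) (not_pdLE_of_cycle hQ c hc m 0)
    rw [← top_le_iff, ← htop]
    exact le_iSup₂_of_le (f := fun (M : ModuleCat.{0} (GentleAlgebra k Q)ᵐᵒᵖ)
      (_ : Module.Finite (GentleAlgebra k Q)ᵐᵒᵖ M) => projDim (GentleAlgebra k Q)ᵐᵒᵖ M)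
      (ModuleCat.of _ (rIdeal (arrOf k Q (c 0)))) hfin le_rfl
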